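/- Let f ∈ F(m,L) with minimizer x⋆, let 0 < θ ≤ 1 with θm < L, and let 0 ≤ ρ ≤ 1. For y ∈ ℝ^d write ỹ = y − x⋆, g = ∇f(y), g_θ(y) = f(y) − f(x⋆) − (θm/2)‖ỹ‖², and q_θ(y) = (L − θm)·g_θ(y) − (1/2)‖g − θmỹ‖². Then for all y, y' ∈ ℝ^d (writing g' = ∇f(y') and ỹ' = y' − x⋆): (1) q_θ(y) ≥ 0; (2) ⟨g − θmỹ, Lỹ − g⟩ ≥ q_θ(y); (3) ⟨g − θmỹ, L(ỹ − ρ²ỹ') − (g − ρ²g')⟩ ≥ q_θ(y) − ρ²·q_θ(y'). -/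

import Mathlib

open scoped InnerProductSpace

/-!
Let `h y = f y - f x⋆ - μ / 2 * ‖y - x⋆‖ ^ 2`, with `μ = θ * m`. It is convex and `K`-smooth for
`K = L - μ`, it vanishes together with its gradient at `x⋆`, and `q = K * h - ‖∇h‖ ^ 2 / 2`.
Cocoercivity of the gradient, `‖∇h u - ∇h v‖ ^ 2 / 2 ≤ K * (h u - h v - ⟪∇h v, u - v⟫)`, is
`q u ≥ 0` for `v = x⋆`, and with `u` and `v` exchanged it rearranges to
`q u - q v ≤ ⟪∇h u, K • (u - v) - (∇h u - ∇h v)⟫`. The last constraint is the convex combination,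
with weights `ρ ^ 2` and `1 - ρ ^ 2`, of this inequality at `v = y'` and at `v = x⋆`.
-/

section

variable {E : Type*} [NormedAddCommGroup E]

/-- The function `g_θ` of the paper, for `μ = θ * m`: it measures `f` from its value at `x₀` and
removes a quadratic of curvature `μ` centred at `x₀`. -/
noncomputable def deflate (μ : ℝ) (x₀ : E) (f : E → ℝ) (y : E) : ℝ :=
  f y - f x₀ - μ / 2 * ‖y - x₀‖ ^ 2

@[simp]
lemma deflate_self (μ : ℝ) (x₀ : E) (f : E → ℝ) : deflate μ x₀ f x₀ = 0 := by
  simp [deflate]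

variable [InnerProductSpace ℝ E]

/-- The gradient map of `deflate μ x₀ f`, when `f'` is that of `f`. -/
def deflateGrad (μ : ℝ) (x₀ : E) (f' : E → E) (y : E) : E :=
  f' y - μ • (y - x₀)

@[simp]
lemma deflateGrad_self (μ : ℝ) (x₀ : E) (f' : E → E) : deflateGrad μ x₀ f' x₀ = f' x₀ := by
  simp [deflateGrad]

/-- The class `F(m, L)` of `m`-strongly convex, `L`-smooth functions, as a relation between
`f` and its gradient map `f'`. The constant `m` may also be zero (`f` convex) or negative (`f`
weakly convex). -/
structure QuadraticBounds (m L : ℝ) (f : E → ℝ) (f' : E → E) : Prop where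
  lower : ∀ u v, f u + ⟪f' u, v - u⟫_ℝ + m / 2 * ‖v - u‖ ^ 2 ≤ f v
  upper : ∀ u v, f v ≤ f u + ⟪f' u, v - u⟫_ℝ + L / 2 * ‖v - u‖ ^ 2

/-- The storage term of the dissipativity analysis, for a convex `K`-smooth function `h` with
gradient map `h'`. The function `q_θ` of the paper is the case `K = L - θ * m`,
`h = deflate (θ * m) x⋆ f`. -/
noncomputable def storage (K : ℝ) (h : E → ℝ) (h' : E → E) (y : E) : ℝ :=
  K * h y - 1 / 2 * ‖h' y‖ ^ 2

namespace QuadraticBounds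

variable {m L K μ c : ℝ} {f h : E → ℝ} {f' h' : E → E} {x₀ : E}

lemma mono_left (hf : QuadraticBounds m L f f') (hμ : μ ≤ m) : QuadraticBounds μ L f f' where
  lower u v := le_trans (by gcongr) (hf.lower u v)
  upper := hf.upper

protected lemma deflate (hf : QuadraticBounds m L f f') (μ : ℝ) (x₀ : E) :
    QuadraticBounds (m - μ) (L - μ) (deflate μ x₀ f) (deflateGrad μ x₀ f') := by
  have expand (u v : E) : ‖v - x₀‖ ^ 2 =
      ‖u - x₀‖ ^ 2 + 2 * ⟪u - x₀, v - u⟫_ℝ + ‖v - u‖ ^ 2 := by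
    rw [← norm_add_sq_real, add_comm, sub_add_sub_cancel]
  constructor <;> intro u v <;>
    simp only [_root_.deflate, deflateGrad, inner_sub_left (f' u), real_inner_smul_left]
  · linear_combination hf.lower u v + μ / 2 * expand u v
  · linear_combination hf.upper u v - μ / 2 * expand u v

lemma norm_grad_sub_sq_le (hh : QuadraticBounds 0 K h h') (hK : 0 < K) (u v : E) :
    1 / 2 * ‖h' u - h' v‖ ^ 2 ≤ K * (h u - h v - ⟪h' v, u - v⟫_ℝ) := by
  set D := h' u - h' v with hD
  -- `w` minimizes the quadratic upper bound based at `u` minus the tangent of `h` at `v`.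
  set w := u - K⁻¹ • D with hw
  have tangent_le : h v + ⟪h' v, u - v⟫_ℝ - K⁻¹ * ⟪h' v, D⟫_ℝ ≤ h w := by
    have := hh.lower v w
    rw [hw, sub_right_comm, inner_sub_right, real_inner_smul_right] at this
    linarith
  have descent : h w ≤ h u - K⁻¹ * ⟪h' u, D⟫_ℝ + K⁻¹ / 2 * ‖D‖ ^ 2 := by
    have := hh.upper u w
    rw [hw, sub_sub_cancel_left, inner_neg_right, real_inner_smul_right, norm_neg, norm_smul,
      mul_pow, Real.norm_eq_abs, sq_abs] at this
    convert this using 1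
    field_simp
    ring
  have inner_D : ⟪h' u, D⟫_ℝ - ⟪h' v, D⟫_ℝ = ‖D‖ ^ 2 := by
    rw [← inner_sub_left, ← hD, real_inner_self_eq_norm_sq]
  have scaled : K⁻¹ * (1 / 2 * ‖D‖ ^ 2) ≤ h u - h v - ⟪h' v, u - v⟫_ℝ := by
    linear_combination tangent_le + descent - K⁻¹ * inner_D
  rwa [inv_mul_le_iff₀ hK] at scaled

lemma storage_le_of_grad_eq_zero (hh : QuadraticBounds 0 K h h') (hK : 0 < K) (h₀ : h' x₀ = 0)
    (y : E) : storage K h h' x₀ ≤ storage K h h' y := by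
  have := hh.norm_grad_sub_sq_le hK y x₀
  simp only [h₀, sub_zero, inner_zero_left] at this
  simp only [storage, h₀, norm_zero]
  linarith

lemma storage_sub_le_inner (hh : QuadraticBounds 0 K h h') (hK : 0 < K) (u v : E) :
    storage K h h' u - storage K h h' v ≤ ⟪h' u, K • (u - v) - (h' u - h' v)⟫_ℝ := by
  have cocoercive := hh.norm_grad_sub_sq_le hK v u
  rw [norm_sub_sq_real, real_inner_comm, ← neg_sub u v, inner_neg_right] at cocoercive
  simp only [storage, inner_sub_right (h' u), real_inner_smul_right, real_inner_self_eq_norm_sq]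
    at cocoercive ⊢
  linarith

lemma storage_sub_mul_le_inner (hh : QuadraticBounds 0 K h h') (hK : 0 < K)
    (hx₀ : h x₀ = 0) (hx₀' : h' x₀ = 0) (hc₀ : 0 ≤ c) (hc₁ : c ≤ 1) (u v : E) :
    storage K h h' u - c * storage K h h' v ≤
      ⟪h' u, K • ((u - x₀) - c • (v - x₀)) - (h' u - c • h' v)⟫_ℝ := by
  have storage_x₀ : storage K h h' x₀ = 0 := by simp [storage, hx₀, hx₀']
  calc
    storage K h h' u - c * storage K h h' v
        = (1 - c) * (storage K h h' u - storage K h h' x₀)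
          + c * (storage K h h' u - storage K h h' v) := by rw [storage_x₀]; ring
    _ ≤ (1 - c) * ⟪h' u, K • (u - x₀) - (h' u - h' x₀)⟫_ℝ
          + c * ⟪h' u, K • (u - v) - (h' u - h' v)⟫_ℝ := by
      have := sub_nonneg.2 hc₁
      gcongr <;> exact hh.storage_sub_le_inner hK _ _
    _ = ⟪h' u, K • ((u - x₀) - c • (v - x₀)) - (h' u - c • h' v)⟫_ℝ := by
      rw [← real_inner_smul_right, ← real_inner_smul_right, ← inner_add_right, hx₀']
      congr 1
      module

end QuadraticBounds

theorem rmm_iqc_general {f : E → ℝ} {f' : E → E} {μ L c : ℝ} {x₀ : E}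
    (hgrad : ∀ u, HasFDerivAt f (innerSL ℝ (f' u)) u) (hf : QuadraticBounds μ L f f')
    (hμL : μ < L) (hx₀ : fderiv ℝ f x₀ = 0) (hc₀ : 0 ≤ c) (hc₁ : c ≤ 1) (y y' : E) :
    let q := storage (L - μ) (deflate μ x₀ f) (deflateGrad μ x₀ f')
    0 ≤ q y ∧
      q y ≤ ⟪deflateGrad μ x₀ f' y, L • (y - x₀) - f' y⟫_ℝ ∧
      q y - c * q y' ≤
        ⟪deflateGrad μ x₀ f' y,
          L • ((y - x₀) - c • (y' - x₀)) - (f' y - c • f' y')⟫_ℝ := by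
  intro q
  have grad_x₀ : f' x₀ = 0 := by
    rwa [(hgrad x₀).fderiv, ← map_zero (innerSL ℝ), innerSL_inj] at hx₀
  have hK : 0 < L - μ := sub_pos.2 hμL
  have hh : QuadraticBounds 0 (L - μ) (deflate μ x₀ f) (deflateGrad μ x₀ f') := by
    simpa using hf.deflate μ x₀
  have hx₀' : deflateGrad μ x₀ f' x₀ = 0 := by simpa
  have weighted {b : ℝ} (hb₀ : 0 ≤ b) (hb₁ : b ≤ 1) :
      q y - b * q y' ≤ ⟪deflateGrad μ x₀ f' y,
        L • ((y - x₀) - b • (y' - x₀)) - (f' y - b • f' y')⟫_ℝ := by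
    convert hh.storage_sub_mul_le_inner hK (deflate_self ..) hx₀' hb₀ hb₁ y y' using 2
    simp only [deflateGrad]
    module
  refine ⟨?_, ?_, weighted hc₀ hc₁⟩
  · simpa [q, storage, grad_x₀] using hh.storage_le_of_grad_eq_zero hK hx₀' y
  · simpa using weighted le_rfl zero_le_one

end

/-- **Integral quadratic constraints for the robust momentum method.**
For `f ∈ F(m, L)` with minimizer `x⋆`, `0 < θ ≤ 1` with `θm < L`, and `0 ≤ ρ ≤ 1`,
writing `q_θ(y) = (L - θm)(f(y) - f(x⋆) - (θm/2)‖y - x⋆‖²) - (1/2)‖∇f(y) - θm(y - x⋆)‖²`,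
we have: (1) `q_θ(y) ≥ 0`; (2) `⟨∇f(y) - θm ỹ, L ỹ - ∇f(y)⟩ ≥ q_θ(y)`;
(3) `⟨∇f(y) - θm ỹ, L(ỹ - ρ² ỹ') - (∇f(y) - ρ² ∇f(y'))⟩ ≥ q_θ(y) - ρ² q_θ(y')`. -/
theorem rmm_iqc
    {d : ℕ} (f : EuclideanSpace ℝ (Fin d) → ℝ)
    (f' : EuclideanSpace ℝ (Fin d) → EuclideanSpace ℝ (Fin d))
    (m L : ℝ) (hm : 0 < m) (hmL : m ≤ L)
    (hgrad : ∀ u, HasGradientAt f (f' u) u)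
    (hsc : ∀ u v, f u + ⟪f' u, v - u⟫_ℝ + m / 2 * ‖v - u‖ ^ 2 ≤ f v)
    (hsm : ∀ u v, f v ≤ f u + ⟪f' u, v - u⟫_ℝ + L / 2 * ‖v - u‖ ^ 2)
    (xstar : EuclideanSpace ℝ (Fin d)) (hstar : ∀ v, f xstar ≤ f v)
    (θ : ℝ) (hθ0 : 0 < θ) (hθ1 : θ ≤ 1) (hθmL : θ * m < L)
    (ρ : ℝ) (hρ0 : 0 ≤ ρ) (hρ1 : ρ ≤ 1) :
    ∀ y y' : EuclideanSpace ℝ (Fin d),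
      (0 ≤ (L - θ * m) * (f y - f xstar - θ * m / 2 * ‖y - xstar‖ ^ 2)
          - 1 / 2 * ‖f' y - (θ * m) • (y - xstar)‖ ^ 2) ∧
      ((L - θ * m) * (f y - f xstar - θ * m / 2 * ‖y - xstar‖ ^ 2)
          - 1 / 2 * ‖f' y - (θ * m) • (y - xstar)‖ ^ 2
        ≤ ⟪f' y - (θ * m) • (y - xstar), L • (y - xstar) - f' y⟫_ℝ) ∧
      (((L - θ * m) * (f y - f xstar - θ * m / 2 * ‖y - xstar‖ ^ 2)
          - 1 / 2 * ‖f' y - (θ * m) • (y - xstar)‖ ^ 2)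
        - ρ ^ 2 * ((L - θ * m) * (f y' - f xstar - θ * m / 2 * ‖y' - xstar‖ ^ 2)
          - 1 / 2 * ‖f' y' - (θ * m) • (y' - xstar)‖ ^ 2)
        ≤ ⟪f' y - (θ * m) • (y - xstar),
            L • ((y - xstar) - ρ ^ 2 • (y' - xstar)) - (f' y - ρ ^ 2 • f' y')⟫_ℝ) :=
  rmm_iqc_general hgrad (QuadraticBounds.mono_left ⟨hsc, hsm⟩ (mul_le_of_le_one_left hm.le hθ1))
    hθmL (IsLocalMin.fderiv_eq_zero (.of_forall hstar)) (sq_nonneg ρ) (pow_le_one₀ hρ0 hρ1)
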